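/- Let R > 1, δ = R^{-m(m+n)²}, τ = m/(m+n), and let A be an m×n matrix over ℒ. Suppose that for every i ∈ ℕ there is no q ∈ 𝔽[X]^{m+n} satisfying both 0 < max_{1≤l≤m} ‖q_l‖ < δ R^{n(τ+i)} and max_{1≤l'≤n} ‖q·C_{l'}(Ā)‖ < δ R^{-m(τ+i)-n}. Then for every K ∈ (0, δ^{m+n} R^{-n²-mn}) and every q ∈ 𝔽[X]^{m+n} whose first m coordinates are not all zero, (max_{1≤l'≤n} ‖q·C_{l'}(Ā)‖)ⁿ > K / (max_{1≤l≤m} ‖q_l‖)^m; in particular A ∈ 𝔅(m,n). -/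

import Mathlib

/-!
Common setup: the field `ℒ = 𝔽((X⁻¹))` of formal Laurent series with coefficients
in a finite field `𝔽` of `k` elements.  We realize `ℒ` as `LaurentSeries 𝔽`
(Hahn series over `ℤ`) in the variable `T = X⁻¹`, so that `X` corresponds to `T⁻¹`
and the polynomial ring `𝔽[X]` corresponds to series supported on nonpositive
exponents.  The absolute value of `x = Σ_{i ≤ N} a_i X^i` (with `a_N ≠ 0`) is
`k^N`, i.e. `k^(-order x)` in terms of the `T`-adic order.
-/

open scoped Classical ENNReal NNReal
open MeasureTheory

noncomputable section

namespace FSBad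

/-- The field `ℒ = 𝔽((X⁻¹))`. -/
abbrev L (𝔽 : Type) [Field 𝔽] : Type := LaurentSeries 𝔽

variable {𝔽 : Type} [Field 𝔽] [Fintype 𝔽]

/-- The absolute value `‖·‖` on `ℒ`: `‖x‖ = k^(deg_X x)`, `‖0‖ = 0`. -/
def lnorm (x : L 𝔽) : ℝ := if x = 0 then 0 else (Fintype.card 𝔽 : ℝ) ^ (-x.order)

/-- Membership in the polynomial ring `𝔽[X] ⊆ ℒ` (polynomials in `X = T⁻¹`). -/
def IsPoly (x : L 𝔽) : Prop := ∀ i : ℤ, 0 < i → x.coeff i = 0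

/-- The height (sup-norm) `‖·‖_∞` on `ℒ^ι`. -/
def vnorm {ι : Type*} (x : ι → L 𝔽) : ℝ := ⨆ i, lnorm (x i)

/-- The closed ball in `ℒ^ι` with centre `c` and radius `ρ`. -/
def vball {ι : Type*} (c : ι → L 𝔽) (ρ : ℝ) : Set (ι → L 𝔽) :=
  {x | vnorm (fun i => x i - c i) ≤ ρ}

/-- `m × n` matrices over `ℒ`, identified with `ℒ^(mn)`. -/
abbrev Mat (𝔽 : Type) [Field 𝔽] (m n : ℕ) : Type := Matrix (Fin m) (Fin n) (L 𝔽)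

/-- The height of a matrix, i.e. the sup-norm on `ℒ^(mn)`. -/
def mnorm {m n : ℕ} (A : Mat 𝔽 m n) : ℝ := ⨆ p : Fin m × Fin n, lnorm (A p.1 p.2)

/-- The closed ball in `ℒ^(mn)` with centre `c` and radius `ρ`. -/
def mball {m n : ℕ} (c : Mat 𝔽 m n) (ρ : ℝ) : Set (Mat 𝔽 m n) :=
  {A | mnorm (A - c) ≤ ρ}

/-- The distance `⟨x⟩` from `x ∈ ℒ^h` to the polynomial lattice `𝔽[X]^h`. -/
def latDist {h : ℕ} (x : Fin h → L 𝔽) : ℝ :=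
  sInf {r : ℝ | ∃ p : Fin h → L 𝔽, (∀ i, IsPoly (p i)) ∧ r = vnorm (fun i => x i - p i)}

/-- The set `𝔅(m,n)` of badly approximable systems of `m` linear forms in `n`
variables over `ℒ`. -/
def Bad (𝔽 : Type) [Field 𝔽] [Fintype 𝔽] (m n : ℕ) : Set (Mat 𝔽 m n) :=
  {A | ∃ K : ℝ, 0 < K ∧ ∀ q : Fin m → L 𝔽, (∀ i, IsPoly (q i)) → q ≠ 0 →
    latDist (Matrix.vecMul q A) ^ n > K / vnorm q ^ m}

/-- The Hausdorff `s`-measure of `E ⊆ ℒ^(mn)`, defined through countable covers by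
balls of radii `< δ`, letting `δ → 0` (the infimum over `δ`-covers is nonincreasing
in `δ`, so the limit is the supremum over `δ > 0`). -/
def hMeasure {m n : ℕ} (s : ℝ) (E : Set (Mat 𝔽 m n)) : ℝ≥0∞ :=
  ⨆ (δ : ℝ) (_ : 0 < δ),
    ⨅ (c : ℕ → Mat 𝔽 m n) (ρ : ℕ → ℝ) (_ : ∀ i, 0 < ρ i ∧ ρ i < δ)
      (_ : E ⊆ ⋃ i, mball (c i) (ρ i)), ∑' i, ENNReal.ofReal (ρ i ^ s)

/-- The Hausdorff dimension of `E ⊆ ℒ^(mn)`. -/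
def hdim {m n : ℕ} (E : Set (Mat 𝔽 m n)) : ℝ :=
  sInf {s : ℝ | 0 ≤ s ∧ hMeasure s E = 0}

/-! ### Schmidt `(α,β)`-games on `ℒ^(mn)` -/

/-- A formal ball: an element of `Ω = ℒ^(mn) × ℝ`. -/
structure FBall (𝔽 : Type) [Field 𝔽] (m n : ℕ) where
  /-- centre -/
  c : Mat 𝔽 m n
  /-- radius -/
  r : ℝ

/-- Formal inclusion of formal balls: `(c₁,ρ₁) ⊆ (c₂,ρ₂)` iff `ρ₁ + ‖c₁ - c₂‖_∞ ≤ ρ₂`. -/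
def FBall.ssub {m n : ℕ} (B₁ B₂ : FBall 𝔽 m n) : Prop :=
  B₁.r + mnorm (B₁.c - B₂.c) ≤ B₂.r

/-- The subset of `ℒ^(mn)` determined by a formal ball. -/
def FBall.toSet {m n : ℕ} (B : FBall 𝔽 m n) : Set (Mat 𝔽 m n) := mball B.c B.r

/-- A strategy for White: given the balls `B₁, …, B_{i+1}` chosen by Black so far,
produce White's next ball. -/
abbrev Strategy (𝔽 : Type) [Field 𝔽] (m n : ℕ) : Type :=
  (i : ℕ) → (Fin (i + 1) → FBall 𝔽 m n) → FBall 𝔽 m n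

/-- White's move at stage `i` when following strategy `str` against Black's balls `B`. -/
def wMove {m n : ℕ} (str : Strategy 𝔽 m n) (B : ℕ → FBall 𝔽 m n) (i : ℕ) : FBall 𝔽 m n :=
  str i fun j => B j.1

/-- Black's move `B_{j+2}` is legal (for parameter `β`): it is a formal subset of
White's ball `W_{j+1}` and has radius `β · ρ(W_{j+1})`. -/
def BlackOk {m n : ℕ} (β : ℝ) (str : Strategy 𝔽 m n) (B : ℕ → FBall 𝔽 m n) (j : ℕ) : Prop :=
  (B (j + 1)).ssub (wMove str B j) ∧ (B (j + 1)).r = β * (wMove str B j).r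

/-- White's move `W_{i+1}` is legal (for parameter `α`): it is a formal subset of
Black's ball `B_{i+1}` and has radius `α · ρ(B_{i+1})`. -/
def WhiteOk {m n : ℕ} (α : ℝ) (str : Strategy 𝔽 m n) (B : ℕ → FBall 𝔽 m n) (i : ℕ) : Prop :=
  (wMove str B i).ssub (B i) ∧ (wMove str B i).r = α * (B i).r

/-- `str` is a winning strategy for White in the `(α,β;S)`-game: against any
sequence of Black balls, White's moves are legal as long as Black has played
legally so far, and if the whole play is legal then the intersection of the
chosen balls is contained in `S`. -/
def WinningStrategy {m n : ℕ} (α β : ℝ) (S : Set (Mat 𝔽 m n)) (str : Strategy 𝔽 m n) : Prop :=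
  ∀ B : ℕ → FBall 𝔽 m n, 0 ≤ (B 0).r →
    (∀ i, (∀ j < i, BlackOk β str B j) → WhiteOk α str B i) ∧
    ((∀ j, BlackOk β str B j) → (⋂ i, (B i).toSet) ⊆ S)

/-- `S` is `(α,β)`-winning. -/
def IsWinningAB {m n : ℕ} (α β : ℝ) (S : Set (Mat 𝔽 m n)) : Prop :=
  ∃ str : Strategy 𝔽 m n, WinningStrategy α β S str

/-- `S` is `α`-winning. -/
def IsWinningA {m n : ℕ} (α : ℝ) (S : Set (Mat 𝔽 m n)) : Prop :=
  ∀ β : ℝ, 0 < β → β < 1 → IsWinningAB α β S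

/-- The winning dimension of `S` (a supremum of a set of reals, which is `0` by
convention when the set is empty). -/
def windim {m n : ℕ} (S : Set (Mat 𝔽 m n)) : ℝ :=
  sSup {α : ℝ | 0 < α ∧ α < 1 ∧ IsWinningA α S}

/-! ### The matrices `Ā`, `Ā^*` and the quantities `M_v`, `D_v`, `∇D_v` -/

/-- `Ā = [[A, I_m], [I_n, 0]]`. Rows are indexed by `Fin m ⊕ Fin n`
(coordinates `q_1, …, q_{m+n}`), columns by `Fin n ⊕ Fin m`. -/
def Abar {m n : ℕ} (A : Mat 𝔽 m n) : Matrix (Fin m ⊕ Fin n) (Fin n ⊕ Fin m) (L 𝔽) :=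
  Matrix.fromBlocks A 1 1 0

/-- `Ā^* = [[Aᵀ, I_n], [I_m, 0]]`. Rows are indexed by `Fin n ⊕ Fin m`,
columns by `Fin m ⊕ Fin n`. -/
def AbarStar {m n : ℕ} (A : Mat 𝔽 m n) : Matrix (Fin n ⊕ Fin m) (Fin m ⊕ Fin n) (L 𝔽) :=
  Matrix.fromBlocks A.transpose 1 1 0

/-- The standard bilinear form `x·y = Σ_i x_i y_i` on `ℒ^ι`. -/
def dotL {ι : Type*} [Fintype ι] (x y : ι → L 𝔽) : L 𝔽 := ∑ i, x i * y i

/-- Strictly increasing `v`-tuples `1 ≤ i_1 < ⋯ < i_v ≤ m`. -/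
def IncTuple (v m : ℕ) : Type := {f : Fin v → Fin m // StrictMono f}

/-- The vector `M_v(A) ∈ ℒ^(C(m,v)²)` of the determinants
`det (y_{i_r} · C_{j_s}(Ā^*))_{1 ≤ r,s ≤ v}` over all strictly increasing index
tuples.  (For `v = 0` every coordinate is an empty determinant, i.e. `1`.) -/
def MvVec {m n : ℕ} (y : Fin m → (Fin n ⊕ Fin m → L 𝔽)) (v : ℕ) (A : Mat 𝔽 m n) :
    IncTuple v m × IncTuple v m → L 𝔽 := fun p =>
  Matrix.det (Matrix.of fun r s : Fin v =>
    dotL (y (p.1.1 r)) fun t => AbarStar A t (Sum.inl (p.2.1 s)))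

/-- `‖M_v(A)‖_∞`. -/
def MvNorm {m n : ℕ} (y : Fin m → (Fin n ⊕ Fin m → L 𝔽)) (v : ℕ) (A : Mat 𝔽 m n) : ℝ :=
  vnorm (MvVec y v A)

/-- `M_v(K) = max_{A ∈ K} ‖M_v(A)‖_∞` for `K ⊆ ℒ^(mn)`. -/
def MvSet {m n : ℕ} (y : Fin m → (Fin n ⊕ Fin m → L 𝔽)) (v : ℕ) (K : Set (Mat 𝔽 m n)) : ℝ :=
  sSup {r : ℝ | ∃ A ∈ K, r = MvNorm y v A}

/-- `D_v(A) = det (y_h · C_l(Ā^*))_{1 ≤ h,l ≤ v}`. -/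
def Dv {m n : ℕ} (y : Fin m → (Fin n ⊕ Fin m → L 𝔽)) (v : ℕ) (hv : v ≤ m)
    (A : Mat 𝔽 m n) : L 𝔽 :=
  Matrix.det (Matrix.of fun h l : Fin v =>
    dotL (y (Fin.castLE hv h)) fun t => AbarStar A t (Sum.inl (Fin.castLE hv l)))

/-- The discrete gradient `∇D_v(A) ∈ ℒ^(mn)`, with coordinates
`D_v(A + E_{ij}) - D_v(A)`. -/
def gradDv {m n : ℕ} (y : Fin m → (Fin n ⊕ Fin m → L 𝔽)) (v : ℕ) (hv : v ≤ m)
    (A : Mat 𝔽 m n) : Fin m × Fin n → L 𝔽 := fun p =>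
  Dv y v hv (A + Matrix.single p.1 p.2 1) - Dv y v hv A

/-- `y_1, …, y_m ∈ ℒ^(m+n)` form an orthonormal system: `y_h · y_{h'} = δ_{h h'}`
and `‖t_1 y_1 + ⋯ + t_m y_m‖_∞ = max_h ‖t_h‖`. -/
def OrthoSystem {m n : ℕ} (y : Fin m → (Fin n ⊕ Fin m → L 𝔽)) : Prop :=
  (∀ h h', dotL (y h) (y h') = if h = h' then 1 else 0) ∧
  (∀ t : Fin m → L 𝔽, vnorm (fun r => ∑ h, t h * y h r) = ⨆ h, lnorm (t h))

/-! ### Distance functions, parallelepipeds and successive minima -/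

/-- The `j`-th successive minimum of a distance function `F` on `ℒ^N`: the infimum
of all `λ > 0` such that `{F < λ}` contains `j` linearly independent points of
`𝔽[X]^N`. -/
def succMin {N : ℕ} (F : (Fin N → L 𝔽) → ℝ) (j : ℕ) : ℝ :=
  sInf {lam : ℝ | 0 < lam ∧ ∃ v : Fin j → (Fin N → L 𝔽),
    (∀ r, ∀ i, IsPoly (v r i)) ∧ LinearIndependent (L 𝔽) v ∧ ∀ r, F (v r) < lam}

/-- The distance function `F_A(x) = max_j c_j⁻¹ ‖Σ_i x_i a_{ij}‖`. -/
def FA {N : ℕ} (A : Matrix (Fin N) (Fin N) (L 𝔽)) (c : Fin N → ℝ)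
    (x : Fin N → L 𝔽) : ℝ :=
  ⨆ j, (c j)⁻¹ * lnorm (∑ i, x i * A i j)

/-- The parallelepiped `P_A(λ) = {x ∈ ℒ^N : F_A(x) < λ}`. -/
def PA {N : ℕ} (A : Matrix (Fin N) (Fin N) (L 𝔽)) (c : Fin N → ℝ) (lam : ℝ) :
    Set (Fin N → L 𝔽) := {x | FA A c x < lam}

/-- The polar distance function `F_A^*(y) = sup_{x ≠ 0} ‖x·y‖ / F_A(x)`. -/
def FAstar {N : ℕ} (A : Matrix (Fin N) (Fin N) (L 𝔽)) (c : Fin N → ℝ)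
    (y : Fin N → L 𝔽) : ℝ :=
  ⨆ x : {x : Fin N → L 𝔽 // x ≠ 0}, lnorm (dotL x.1 y) / FA A c x.1

/-! ### Haar measure, characterized by translation invariance and normalization -/

/-- The Borel σ-algebra on `ℒ^N`, generated by the balls. -/
def vecSigma (𝔽 : Type) [Field 𝔽] [Fintype 𝔽] (N : ℕ) : MeasurableSpace (Fin N → L 𝔽) :=
  MeasurableSpace.generateFrom {s | ∃ c ρ, (0 : ℝ) < ρ ∧ s = vball c ρ}

/-- `μ` is the Haar measure on `ℒ^N`: translation invariant and normalized so that
the unit ball `I^N` has measure `1` (these properties determine it uniquely). -/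
def IsHaarVec {N : ℕ} (μ : @Measure (Fin N → L 𝔽) (vecSigma 𝔽 N)) : Prop :=
  (∀ (v : Fin N → L 𝔽) (s : Set (Fin N → L 𝔽)), μ ((fun x => x + v) ⁻¹' s) = μ s) ∧
  μ {x | ∀ i, lnorm (x i) < 1} = 1

/-- The Borel σ-algebra on `ℒ^(mn)`, generated by the balls. -/
def matSigma (𝔽 : Type) [Field 𝔽] [Fintype 𝔽] (m n : ℕ) : MeasurableSpace (Mat 𝔽 m n) :=
  MeasurableSpace.generateFrom {s | ∃ c ρ, (0 : ℝ) < ρ ∧ s = mball c ρ}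

/-- `μ` is the Haar measure on `ℒ^(mn)`: translation invariant and normalized so
that the unit ball `I^(mn)` has measure `1`. -/
def IsHaarMat {m n : ℕ} (μ : @Measure (Mat 𝔽 m n) (matSigma 𝔽 m n)) : Prop :=
  (∀ (v : Mat 𝔽 m n) (s : Set (Mat 𝔽 m n)), μ ((fun x => x + v) ⁻¹' s) = μ s) ∧
  μ {A | ∀ i j, lnorm (A i j) < 1} = 1

/-! ### The constants of Section 3 -/

/-- `τ = m/(m+n)`. -/
def tau (m n : ℕ) : ℝ := m / (m + n)

/-- `δ = R^(-m(m+n)²)`. -/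
def del (R : ℝ) (m n : ℕ) : ℝ := R ^ (-((m : ℝ) * ((m : ℝ) + n) ^ 2))

/-- `δ* = R^(-n(m+n)²)`. -/
def delStar (R : ℝ) (m n : ℕ) : ℝ := R ^ (-((n : ℝ) * ((m : ℝ) + n) ^ 2))

theorem one_le_lnorm {𝔽 : Type} [Field 𝔽] [Fintype 𝔽] (x : L 𝔽) (hx : IsPoly x) (h0 : x ≠ 0) :
    1 ≤ lnorm x := by
  unfold lnorm
  rw [if_neg h0]
  have h1 : x.order ≤ 0 := by
    by_contra h
    exact (HahnSeries.coeff_order_eq_zero.not.mpr h0) (hx _ (not_le.mp h))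
  have hc : (1 : ℝ) ≤ Fintype.card 𝔽 := by exact_mod_cast Fintype.card_pos
  exact one_le_zpow₀ hc (by omega)

theorem lnorm_nonneg' {𝔽 : Type} [Field 𝔽] [Fintype 𝔽] (x : L 𝔽) : 0 ≤ lnorm x := by
  unfold lnorm
  split_ifs
  · exact le_rfl
  · positivity

theorem vecMul_Abar {𝔽 : Type} [Field 𝔽] [Fintype 𝔽] {m n : ℕ} (A : Mat 𝔽 m n)
    (q : Fin m ⊕ Fin n → L 𝔽) (l : Fin n) :
    Matrix.vecMul q (Abar A) (Sum.inl l) =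
      Matrix.vecMul (fun i => q (Sum.inl i)) A l + q (Sum.inr l) := by
  simp [Matrix.vecMul, dotProduct, Abar, Fintype.sum_sum_type, Matrix.one_apply]

theorem real_core (m n : ℕ) (hm : 0 < m) (hn : 0 < n) (R : ℝ) (hR : 1 < R) (Q P : ℝ)
    (hQ : 1 ≤ Q) (hP : 0 ≤ P)
    (h : ∀ i : ℕ, Q < del R m n * R ^ ((n : ℝ) * (tau m n + i)) →
      del R m n * R ^ (-(m : ℝ) * (tau m n + i) - n) ≤ P) :
    del R m n ^ (m + n) * R ^ (-((n : ℝ) ^ 2) - (m : ℝ) * n) ≤ P ^ n * Q ^ m := by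
  have hR0 : 0 < R := by linarith
  have hm1 : (1 : ℝ) ≤ m := by exact_mod_cast hm
  have hn1 : (1 : ℝ) ≤ n := by exact_mod_cast hn
  have hd : 0 < del R m n := by unfold del; positivity
  have ht : 0 ≤ tau m n := by unfold tau; positivity
  have hex : ∃ i : ℕ, Q < del R m n * R ^ ((n : ℝ) * (tau m n + i)) := by
    obtain ⟨i, hi⟩ := pow_unbounded_of_one_lt (Q / del R m n) hR
    refine ⟨i, ?_⟩
    rw [div_lt_iff₀' hd] at hi
    refine hi.trans_le ?_
    gcongr
    rw [← Real.rpow_natCast]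
    apply Real.rpow_le_rpow_of_exponent_le hR.le
    have : (0 : ℝ) ≤ i := by positivity
    nlinarith
  have hspec := Nat.find_spec hex
  have hmin := fun j => Nat.find_min hex (m := j)
  generalize Nat.find hex = i at hspec hmin
  rcases i with _ | j
  · exfalso
    have : del R m n * R ^ ((n : ℝ) * (tau m n + (0 : ℕ))) ≤ 1 := by
      unfold del
      rw [← Real.rpow_add hR0]
      apply Real.rpow_le_one_of_one_le_of_nonpos hR.le
      have : tau m n ≤ 1 := by
        unfold tau
        rw [div_le_one (by positivity)]
        linarith
      have h2 : (n : ℝ) * tau m n ≤ n := by nlinarith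
      have h3 : (n : ℝ) ≤ m * ((m : ℝ) + n) ^ 2 := by nlinarith
      push_cast
      linarith
    linarith
  · have h1 := not_lt.mp (hmin j (Nat.lt_succ_self j))
    have h2 := h _ hspec
    calc _ = (del R m n * R ^ (-(m : ℝ) * (tau m n + (j + 1 : ℕ)) - n)) ^ n *
          (del R m n * R ^ ((n : ℝ) * (tau m n + j))) ^ m := by
          rw [mul_pow, mul_pow, ← Real.rpow_mul_natCast hR0.le, ← Real.rpow_mul_natCast hR0.le,
            mul_mul_mul_comm, ← Real.rpow_add hR0, ← pow_add, add_comm n m]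
          congr 2
          push_cast
          ring
      _ ≤ _ := by gcongr

/-- **Theorem (Statement 14).** If for every `i ∈ ℕ` the system (14)–(15) has no
polynomial solutions, then for every `K ∈ (0, δ^{m+n} R^{-n²-mn})` and every
`q ∈ 𝔽[X]^{m+n}` whose first `m` coordinates are not all zero,
`(max_{l'} ‖q·C_{l'}(Ā)‖)ⁿ > K / (max_l ‖q_l‖)^m`; in particular `A ∈ 𝔅(m,n)`. -/
theorem avoid_implies_Bad (𝔽 : Type) [Field 𝔽] [Fintype 𝔽] (m n : ℕ)
    (hm : 0 < m) (hn : 0 < n) (R : ℝ) (hR : 1 < R) (A : Mat 𝔽 m n)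
    (havoid : ∀ i : ℕ, ¬ ∃ q : Fin m ⊕ Fin n → L 𝔽, (∀ t, IsPoly (q t)) ∧
      0 < (⨆ l : Fin m, lnorm (q (Sum.inl l))) ∧
      (⨆ l : Fin m, lnorm (q (Sum.inl l))) < del R m n * R ^ ((n : ℝ) * (tau m n + i)) ∧
      (⨆ l' : Fin n, lnorm (Matrix.vecMul q (Abar A) (Sum.inl l'))) <
        del R m n * R ^ (-(m : ℝ) * (tau m n + i) - n)) :
    (∀ K : ℝ, 0 < K → K < del R m n ^ (m + n) * R ^ (-((n : ℝ) ^ 2) - (m : ℝ) * n) →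
      ∀ q : Fin m ⊕ Fin n → L 𝔽, (∀ t, IsPoly (q t)) →
        (¬ ∀ l : Fin m, q (Sum.inl l) = 0) →
        (⨆ l' : Fin n, lnorm (Matrix.vecMul q (Abar A) (Sum.inl l'))) ^ n >
          K / (⨆ l : Fin m, lnorm (q (Sum.inl l))) ^ m) ∧
    A ∈ Bad 𝔽 m n := by
  have key : ∀ q : Fin m ⊕ Fin n → L 𝔽, (∀ t, IsPoly (q t)) →
        (¬ ∀ l : Fin m, q (Sum.inl l) = 0) →
        1 ≤ (⨆ l : Fin m, lnorm (q (Sum.inl l))) ∧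
        del R m n ^ (m + n) * R ^ (-((n : ℝ) ^ 2) - (m : ℝ) * n) ≤
        (⨆ l' : Fin n, lnorm (Matrix.vecMul q (Abar A) (Sum.inl l'))) ^ n *
          (⨆ l : Fin m, lnorm (q (Sum.inl l))) ^ m := by
    intro q hq hne
    push Not at hne
    obtain ⟨l, hl⟩ := hne
    have h1 : 1 ≤ (⨆ l : Fin m, lnorm (q (Sum.inl l))) :=
      (one_le_lnorm _ (hq _) hl).trans
        (le_ciSup (f := fun l : Fin m => lnorm (q (Sum.inl l))) (Set.finite_range _).bddAbove l)
    refine ⟨h1, real_core m n hm hn R hR _ _ h1 (Real.iSup_nonneg fun _ => lnorm_nonneg' _) ?_⟩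
    intro i hi
    by_contra hc
    exact havoid i ⟨q, hq, by linarith, hi, not_le.mp hc⟩
  have hR0 : 0 < R := by linarith
  have hC : 0 < del R m n ^ (m + n) * R ^ (-((n : ℝ) ^ 2) - (m : ℝ) * n) := by
    unfold del; positivity
  refine ⟨?_, ?_⟩
  · intro K _ hK q hq hne
    obtain ⟨h1, h2⟩ := key q hq hne
    rw [gt_iff_lt, div_lt_iff₀ (by positivity)]
    linarith
  · generalize del R m n ^ (m + n) * R ^ (-((n : ℝ) ^ 2) - (m : ℝ) * n) = C at key hC
    refine ⟨C / 2, by positivity, ?_⟩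
    intro q hq hne
    have hne' : ¬ ∀ l, q l = 0 := fun h => hne (funext h)
    have hQ : 1 ≤ vnorm q := (key (Sum.elim q 0)
      (by rintro (t | t)
          · exact hq t
          · intro i _; rfl) hne').1
    have hlow : (C / vnorm q ^ m) ^ ((n : ℝ)⁻¹) ≤ latDist (Matrix.vecMul q A) := by
      unfold latDist
      apply le_csInf
      · exact ⟨_, 0, fun i j _ => rfl, rfl⟩
      · rintro r ⟨p, hp, rfl⟩
        have h2 := (key (Sum.elim q (fun i => - p i))
          (by rintro (t | t)
              · exact hq t
              · intro i hi
                simp [hp t i hi]) hne').2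
        simp only [vecMul_Abar, Sum.elim_inl, Sum.elim_inr, ← sub_eq_add_neg] at h2
        change C ≤ vnorm (fun i => Matrix.vecMul q A i - p i) ^ n * vnorm q ^ m at h2
        rw [← div_le_iff₀ (by positivity)] at h2
        have h0 : 0 ≤ vnorm (fun i => Matrix.vecMul q A i - p i) :=
          Real.iSup_nonneg fun _ => lnorm_nonneg' _
        calc _ ≤ (vnorm (fun i => Matrix.vecMul q A i - p i) ^ n) ^ ((n : ℝ)⁻¹) := by
              gcongr
          _ = _ := Real.pow_rpow_inv_natCast h0 hn.ne'
    have hQ0 : 0 < vnorm q := by linarith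
    have h3 : C / vnorm q ^ m ≤ latDist (Matrix.vecMul q A) ^ n := by
      calc _ = ((C / vnorm q ^ m) ^ ((n : ℝ)⁻¹)) ^ n :=
            (Real.rpow_inv_natCast_pow (by positivity) hn.ne').symm
        _ ≤ _ := by gcongr
    refine lt_of_lt_of_le ?_ h3
    gcongr
    linarith


end FSBad
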